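/- Fix a ∈ ℤ and let u, v, w ∈ Ḣ^∞_⋄ (smooth divergence-free mean-zero vector fields). Then: (i) ‖B[u,v]‖_{Ḣ^a} ≤ ‖u vᵀ‖_{Ḣ^{a+1}}, where ‖u vᵀ‖²_{Ḣ^{a+1}} = Σ_{i,j=1}^{2} ‖u_i v_j‖²_{Ḣ^{a+1}}; (ii) |⟨B[u,v], w⟩_{Ḣ^a}| ≲ min{ ‖u‖_{B^{|a|}} ‖v‖_{Ḣ^a}, ‖u‖_{Ḣ^a} ‖v‖_{B^{|a|}} } · ‖w‖_{Ḣ^{a+1}}, where B^ℓ = C^ℓ(Ω)² for 0 ≤ ℓ ≤ 1 and B^ℓ = Ḣ^ℓ for ℓ ≥ 2. These estimates extend by density to u, v, w of the Sobolev regularity prescribed by each inequality. -/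

import Mathlib

open MeasureTheory Set
open scoped BigOperators

noncomputable section

namespace NS2D

/-- Nonzero Fourier frequencies of the 2D torus `Ω = 𝕋²`. -/
def Freq : Type := {k : ℤ × ℤ // k ≠ 0}

/-- Squared Euclidean modulus `|k|²` of a frequency. -/
def knormSq (k : Freq) : ℝ := (k.1.1 : ℝ) ^ 2 + (k.1.2 : ℝ) ^ 2

/-- Eigenvalue `λ_k = 4π²|k|²` of the periodic Laplacian `−Δ`. -/
def lam (k : Freq) : ℝ := 4 * Real.pi ^ 2 * knormSq k

/-- A divergence-free mean-zero vector field `u ∈ Ḣ_⋄` (or, more generally, an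
element of the scale `Ḣ^α_⋄`) on the torus is represented by its Fourier
coefficients `c k` along the orthonormal basis
`e_k(x) = |k|⁻¹ (k₂, −k₁) exp(2πi k·x)` of divergence-free fields. -/
abbrev Coef : Type := Freq → ℂ

/-- Negation of a frequency. -/
def fneg (k : Freq) : Freq := ⟨-k.1, neg_ne_zero.mpr k.2⟩

/-- The conjugacy condition expressing that the coefficients `c` represent a
real-valued vector field (note `e_{−k} = − conj e_k`). -/
def IsReal (c : Coef) : Prop := ∀ k, c (fneg k) = - (starRingEnd ℂ) (c k)

/-- Squared homogeneous Sobolev norm `‖·‖²_{Ḣ^α} = Σ_k λ_k^α |c k|²`. -/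
def hSq (α : ℝ) (c : Coef) : ℝ := ∑' k, lam k ^ α * ‖c k‖ ^ 2

/-- Homogeneous Sobolev norm `‖·‖_{Ḣ^α}`. -/
def hN (α : ℝ) (c : Coef) : ℝ := Real.sqrt (hSq α c)

/-- Finiteness of the `Ḣ^α`-norm. -/
def FinH (α : ℝ) (c : Coef) : Prop := Summable fun k => lam k ^ α * ‖c k‖ ^ 2

/-- Membership in `Ḣ^α_⋄` (real-valued field with finite `Ḣ^α`-norm). -/
def MemH (α : ℝ) (c : Coef) : Prop := IsReal c ∧ FinH α c

/-- Membership in `Ḣ^∞_⋄ = C^∞(Ω)² ∩ Ḣ_⋄`: all Sobolev norms are finite. -/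
def MemHinf (c : Coef) : Prop := ∀ α : ℝ, MemH α c

/-- Real `Ḣ^α` inner product `⟨·,·⟩_{Ḣ^α}` (for real-valued fields). -/
def hInner (α : ℝ) (c d : Coef) : ℝ := ∑' k, lam k ^ α * (c k * (starRingEnd ℂ) (d k)).re

/-- The `L²` inner product. -/
def innerC (c d : Coef) : ℂ := ∑' k, c k * (starRingEnd ℂ) (d k)

/-- The unit vector `(k₂, −k₁)/|k|` spanning the divergence-free direction at
frequency `k`. -/
def evec (k : Freq) : ℝ × ℝ :=
  ((k.1.2 : ℝ) / Real.sqrt (knormSq k), -((k.1.1 : ℝ)) / Real.sqrt (knormSq k))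

/-- Euclidean dot product on `ℝ²`. -/
def dotR (a b : ℝ × ℝ) : ℝ := a.1 * b.1 + a.2 * b.2

/-- A frequency as a real vector. -/
def fvec (k : Freq) : ℝ × ℝ := ((k.1.1 : ℝ), (k.1.2 : ℝ))

/-- Fourier coefficients (along the basis `e_k`) of the Leray-projected
transport nonlinearity `B[u,v] = P[(u·∇)v]`:
`(B[u,v])^(k) · ē_k = 2πi Σ_{m+n=k, n≠0} c_m d_n (e_m·n)(e_n·e_k)`. -/
def Bc (c d : Coef) : Coef := fun k =>
  (((2 * Real.pi : ℝ) : ℂ) * Complex.I) *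
    ∑' m : Freq,
      if h : k.1 - m.1 ≠ 0 then
        c m * d ⟨k.1 - m.1, h⟩ *
          (((dotR (evec m) (fvec ⟨k.1 - m.1, h⟩) *
            dotR (evec ⟨k.1 - m.1, h⟩) (evec k) : ℝ)) : ℂ)
      else 0

/-- The Laplacian `Δ` acting on the scale: `(Δu)^(k) = −λ_k û(k)`. -/
def lapC (c : Coef) : Coef := fun k => -((lam k : ℝ) : ℂ) * c k

/-- Continuity of a trajectory `t ↦ u(t)`, `t ∈ [0,T]`, for the `Ḣ^α`-norm:
`u ∈ C([0,T], Ḣ^α_⋄)`. -/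
def ContH (α : ℝ) (T : ℝ) (u : ℝ → Coef) : Prop :=
  ∀ t ∈ Icc (0:ℝ) T, ∀ ε > 0, ∃ δ > 0, ∀ s ∈ Icc (0:ℝ) T,
    |s - t| < δ → hN α (u s - u t) < ε

/-- Membership `u ∈ L²([0,T], Ḣ^α_⋄)`. -/
def MemL2H (α : ℝ) (T : ℝ) (u : ℝ → Coef) : Prop :=
  (∀ t ∈ Ioc (0:ℝ) T, MemH α (u t)) ∧
    IntegrableOn (fun t => hSq α (u t)) (Ioc 0 T)

/-- `u` is a strong solution on `[0,T]` of the (Leray-projected) periodic 2D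
Navier–Stokes equations `du/dt + νAu + B[u,u] = f`, `u(0) = θ`, posed in `Ḣ_⋄`:
the Fourier coefficients satisfy the corresponding system of ODEs on `(0,T]`,
the trajectory is continuous into `Ḣ¹_⋄` (in particular at `t = 0`), and lies
in `L²([0,T], Ḣ²_⋄)`. -/
structure IsNSSol (ν : ℝ) (f : Coef) (T : ℝ) (θ : Coef) (u : ℝ → Coef) : Prop where
  init : u 0 = θ
  real : ∀ t ∈ Icc (0:ℝ) T, IsReal (u t)
  deriv : ∀ (k : Freq), ∀ t ∈ Ioc (0:ℝ) T,
    HasDerivAt (fun s => u s k)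
      (f k - ((ν * lam k : ℝ) : ℂ) * u t k - Bc (u t) (u t) k) t
  contH1 : ContH 1 T u
  memL2H2 : MemL2H 2 T u

/-- `U` solves the linear parabolic equation
`dU/dt − νΔU + B[u₀, U] + B[U, u₁] = g`, `U(0) = ξ`, on `[0,T]`. -/
structure IsLinPSol (ν : ℝ) (u₀ u₁ : ℝ → Coef) (g : ℝ → Coef) (T : ℝ) (ξ : Coef)
    (U : ℝ → Coef) : Prop where
  init : U 0 = ξ
  real : ∀ t ∈ Icc (0:ℝ) T, IsReal (U t)
  deriv : ∀ (k : Freq), ∀ t ∈ Ioc (0:ℝ) T,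
    HasDerivAt (fun s => U s k)
      (g t k - ((ν * lam k : ℝ) : ℂ) * U t k - Bc (u₀ t) (U t) k - Bc (U t) (u₁ t) k) t

/-- `U = 𝕀_θ[ξ]` solves the linearisation of Navier–Stokes along the
trajectory `u₀`: `dU/dt − νΔU + B[u₀,U] + B[U,u₀] = 0`, `U(0) = ξ`. -/
def IsLinSol (ν : ℝ) (u₀ : ℝ → Coef) (T : ℝ) (ξ : Coef) (U : ℝ → Coef) : Prop :=
  IsLinPSol ν u₀ u₀ (fun _ => 0) T ξ U

/-- The heat semigroup `S_t = e^{νtΔ}` on the scale `Ḣ^α_⋄`. -/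
def heatS (ν t : ℝ) (c : Coef) : Coef := fun k =>
  ((Real.exp (-(ν * lam k * t)) : ℝ) : ℂ) * c k

/-- Duhamel representation of the solution of the periodic heat equation
`du/dt − νΔu = g`, `u(0) = h`. -/
def heatSol (ν : ℝ) (g : ℝ → Coef) (h : Coef) : ℝ → Coef := fun t k =>
  ((Real.exp (-(ν * lam k * t)) : ℝ) : ℂ) *
    (h k + ∫ s in (0:ℝ)..t, ((Real.exp (ν * lam k * s) : ℝ) : ℂ) * g s k)

/-- Real-linearity of a map on the coefficient space. -/
def IsLinMap (Λ : Coef → Coef) : Prop :=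
  (∀ c d, Λ (c + d) = Λ c + Λ d) ∧ ∀ (r : ℝ) (c : Coef), Λ (r • c) = r • Λ c

/-- `Λ` defines a compact (linear) operator `Ḣ^α_⋄ → Ḣ^β_⋄`: it is linear,
maps `Ḣ^α_⋄` into `Ḣ^β_⋄`, and the image of the `Ḣ^α`-unit ball is totally
bounded for the `Ḣ^β`-norm. -/
def IsCompactOp (α β : ℝ) (Λ : Coef → Coef) : Prop :=
  IsLinMap Λ ∧ (∀ c, MemH α c → MemH β (Λ c)) ∧
    ∀ ε > 0, ∃ S : Finset Coef, ∀ c, MemH α c → hN α c ≤ 1 →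
      ∃ s ∈ S, hN β (Λ c - s) < ε

/-- The index `a* = |a|+1` if `|a| ≤ 1`, `a* = |a|` if `|a| ≥ 2`. -/
def astar (a : ℤ) : ℤ := if |a| ≤ 1 then |a| + 1 else |a|

/-- `i`-th component of the unit vector `evec k`. -/
def evecC (i : Fin 2) (k : Freq) : ℝ := if i = 0 then (evec k).1 else (evec k).2

/-- Fourier coefficients (over all of `ℤ²`) of the scalar component `u_i` of a
divergence-free field with coefficients `c`. -/
def compCoef (i : Fin 2) (c : Coef) : ℤ × ℤ → ℂ := fun n =>
  if h : n ≠ 0 then c ⟨n, h⟩ * ((evecC i ⟨n, h⟩ : ℝ) : ℂ) else 0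

/-- Convolution: Fourier coefficients of a pointwise product of two scalar
functions. -/
def convC (F G : ℤ × ℤ → ℂ) : ℤ × ℤ → ℂ := fun n => ∑' m : ℤ × ℤ, F m * G (n - m)

/-- Squared homogeneous Sobolev norm of a scalar function given by its Fourier
coefficients over `ℤ²`. -/
def hSqScalar (α : ℝ) (F : ℤ × ℤ → ℂ) : ℝ := ∑' k : Freq, lam k ^ α * ‖F k.1‖ ^ 2

/-- `‖u vᵀ‖²_{Ḣ^α} = Σ_{i,j=1}^2 ‖u_i v_j‖²_{Ḣ^α}`. -/
def hSqMat (α : ℝ) (c d : Coef) : ℝ :=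
  ∑ i : Fin 2, ∑ j : Fin 2, hSqScalar α (convC (compCoef i c) (compCoef j d))

/-- The character `exp(2πi k·x)`. -/
def efun (k : Freq) (x : ℝ × ℝ) : ℂ :=
  Complex.exp ((((2 * Real.pi : ℝ)) : ℂ) * Complex.I *
    ((k.1.1 : ℂ) * (x.1 : ℂ) + (k.1.2 : ℂ) * (x.2 : ℂ)))

/-- Pointwise evaluation of the `i`-th component of the field. -/
def evalComp (i : Fin 2) (c : Coef) (x : ℝ × ℝ) : ℂ :=
  ∑' k, c k * ((evecC i k : ℝ) : ℂ) * efun k x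

/-- Supremum norm (`C⁰`-norm) of the field. -/
def c0N (c : Coef) : ℝ := ⨆ x : ℝ × ℝ, max ‖evalComp 0 c x‖ ‖evalComp 1 c x‖

/-- The partial derivative `∂_j` acting on divergence-free fields. -/
def pderiv (j : Fin 2) (c : Coef) : Coef := fun k =>
  (((2 * Real.pi : ℝ) : ℂ) * Complex.I) *
    (if j = 0 then ((k.1.1 : ℤ) : ℂ) else ((k.1.2 : ℤ) : ℂ)) * c k

/-- `C¹`-norm of the field. -/
def c1N (c : Coef) : ℝ := c0N c + c0N (pderiv 0 c) + c0N (pderiv 1 c)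

/-- Norm of the multiplier space `B^ℓ`: `C^ℓ(Ω)²` for `ℓ ≤ 1` and `Ḣ^ℓ` for
`ℓ ≥ 2`. -/
def bN (ℓ : ℕ) (c : Coef) : ℝ :=
  if ℓ = 0 then c0N c else if ℓ = 1 then c1N c else hN (ℓ : ℝ) c

end NS2D

namespace NS2D


local instance instMSCircle : MeasureSpace UnitAddCircle := ⟨AddCircle.haarAddCircle⟩

local instance : Measure.IsAddHaarMeasure (volume : Measure UnitAddCircle) :=
  inferInstanceAs (Measure.IsAddHaarMeasure AddCircle.haarAddCircle)

local instance : IsProbabilityMeasure (volume : Measure UnitAddCircle) :=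
  inferInstanceAs (IsProbabilityMeasure AddCircle.haarAddCircle)

/-- Index identification. -/
def eIdx : ℤ × ℤ ≃ (Fin 2 → ℤ) := (finTwoArrowEquiv ℤ).symm

/-- Continuous function on the torus with given Fourier coefficients. -/
def fn (F : ℤ × ℤ → ℂ) : C(UnitAddTorus (Fin 2), ℂ) :=
  ∑' m, F m • UnitAddTorus.mFourier (eIdx m)

theorem fn_hasSum {F : ℤ × ℤ → ℂ} (hF : Summable fun m => ‖F m‖) :
    HasSum (fun m => F m • UnitAddTorus.mFourier (eIdx m)) (fn F) := by
  refine Summable.hasSum (Summable.of_norm ?_)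
  simpa only [norm_smul, UnitAddTorus.mFourier_norm, mul_one] using hF

theorem fn_hasSum_apply {F : ℤ × ℤ → ℂ} (hF : Summable fun m => ‖F m‖)
    (x : UnitAddTorus (Fin 2)) :
    HasSum (fun m => F m * UnitAddTorus.mFourier (eIdx m) x) (fn F x) := by
  simpa only [map_smul] using! (ContinuousMap.evalCLM ℂ x).hasSum (fn_hasSum hF)

theorem fn_coeff {F : ℤ × ℤ → ℂ} (hF : Summable fun m => ‖F m‖) (i : ℤ × ℤ) :
    UnitAddTorus.mFourierCoeff ((fn F).toLp 2 volume ℂ) (eIdx i) = F i := by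
  rw [← UnitAddTorus.mFourierBasis_repr, HilbertBasis.repr_apply_apply]
  have h1 := (ContinuousMap.toLp (E := ℂ) 2 (volume : Measure (UnitAddTorus (Fin 2))) ℂ).hasSum
    (fn_hasSum hF)
  have h2 := (innerSL ℂ (UnitAddTorus.mFourierBasis (eIdx i))).hasSum h1
  have h3 : HasSum (fun m => if m = i then F i else 0) (F i) := hasSum_ite_eq i (F i)
  refine HasSum.unique (h2.congr_fun ?_) h3 |>.trans rfl
  intro m
  have := orthonormal_iff_ite.mp (UnitAddTorus.orthonormal_mFourier (d := Fin 2)) (eIdx i) (eIdx m)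
  simp only [map_smul, innerSL_apply_apply, UnitAddTorus.coe_mFourierBasis, smul_eq_mul]
  erw [this]
  by_cases h : m = i
  · subst h; simp
  · have : ¬ i = m := fun h' => h h'.symm
    simp [h, this]

theorem fn_parseval {F : ℤ × ℤ → ℂ} (hF : Summable fun m => ‖F m‖) :
    HasSum (fun m => ‖F m‖ ^ 2) (∫ t, ‖fn F t‖ ^ 2) := by
  have h := UnitAddTorus.hasSum_sq_mFourierCoeff ((fn F).toLp 2 volume ℂ)
  rw [← eIdx.hasSum_iff] at h
  have h2 : (∫ t, ‖((fn F).toLp 2 (volume : Measure (UnitAddTorus (Fin 2))) ℂ) t‖ ^ 2)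
      = ∫ t, ‖fn F t‖ ^ 2 := by
    apply integral_congr_ae
    filter_upwards [ContinuousMap.coeFn_toLp (p := 2) (𝕜 := ℂ) volume (fn F)] with t ht
    rw [ht]
  rw [← h2]
  refine h.congr_fun fun m => ?_
  simp only [Function.comp, fn_coeff hF]

theorem conv_summable_aux {F G : ℤ × ℤ → ℂ} (hF : Summable fun m => ‖F m‖)
    (hG : Summable fun m => ‖G m‖) :
    Summable (fun p : (ℤ × ℤ) × (ℤ × ℤ) => ‖F p.2 * G (p.1 - p.2)‖) := by
  have h := hF.mul_of_nonneg hG (fun _ => norm_nonneg _) (fun _ => norm_nonneg _)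
  let e : (ℤ × ℤ) × (ℤ × ℤ) ≃ (ℤ × ℤ) × (ℤ × ℤ) :=
    { toFun := fun p => (p.2, p.1 - p.2)
      invFun := fun q => (q.1 + q.2, q.1)
      left_inv := fun p => by ext <;> simp
      right_inv := fun q => by ext <;> simp }
  have h2 := e.summable_iff.mpr h
  refine h2.congr fun p => ?_
  simp [e]

theorem conv_summable {F G : ℤ × ℤ → ℂ} (hF : Summable fun m => ‖F m‖)
    (hG : Summable fun m => ‖G m‖) : Summable fun n => ‖convC F G n‖ := by
  have h := (conv_summable_aux hF hG)
  refine Summable.of_nonneg_of_le (fun _ => norm_nonneg _) (fun n => ?_) h.prod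
  exact norm_tsum_le_tsum_norm (h.prod_factor n)

theorem fn_conv {F G : ℤ × ℤ → ℂ} (hF : Summable fun m => ‖F m‖)
    (hG : Summable fun m => ‖G m‖) (x : UnitAddTorus (Fin 2)) :
    fn (convC F G) x = fn F x * fn G x := by
  have e1 := (fn_hasSum_apply (conv_summable hF hG) x).tsum_eq
  have e2 := (fn_hasSum_apply hF x).tsum_eq
  have e3 := (fn_hasSum_apply hG x).tsum_eq
  have nx : ∀ n, ‖UnitAddTorus.mFourier (d := Fin 2) n x‖ ≤ 1 := fun n => by
    have := (UnitAddTorus.mFourier (d := Fin 2) n).norm_coe_le_norm x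
    rwa [UnitAddTorus.mFourier_norm] at this
  have sF : Summable fun m => ‖F m * UnitAddTorus.mFourier (eIdx m) x‖ := by
    refine Summable.of_nonneg_of_le (fun _ => norm_nonneg _) (fun n => ?_) hF
    rw [norm_mul]; exact mul_le_of_le_one_right (norm_nonneg _) (nx _)
  have sG : Summable fun m => ‖G m * UnitAddTorus.mFourier (eIdx m) x‖ := by
    refine Summable.of_nonneg_of_le (fun _ => norm_nonneg _) (fun n => ?_) hG
    rw [norm_mul]; exact mul_le_of_le_one_right (norm_nonneg _) (nx _)
  rw [← e1, ← e2, ← e3, tsum_mul_tsum_of_summable_norm sF sG]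
  let e : (ℤ × ℤ) × (ℤ × ℤ) ≃ (ℤ × ℤ) × (ℤ × ℤ) :=
    { toFun := fun p => (p.2, p.1 - p.2)
      invFun := fun q => (q.1 + q.2, q.1)
      left_inv := fun p => by ext <;> simp
      right_inv := fun q => by ext <;> simp }
  rw [← e.tsum_eq]
  have hs := (e.summable_iff.mpr (summable_mul_of_summable_norm sF sG))
  have hs' := hs.tsum_prod
  simp only [Function.comp_def] at hs'
  rw [hs']
  refine tsum_congr fun n => ?_
  rw [convC, ← tsum_mul_right]
  refine tsum_congr fun m => ?_
  simp only [e, Equiv.coe_fn_mk]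
  have : eIdx n = eIdx m + eIdx (n - m) := by
    funext i; fin_cases i <;> simp [eIdx, finTwoArrowEquiv]
  rw [this, UnitAddTorus.mFourier_add]
  ring

/-- Character. -/
def chr (m : ℤ × ℤ) (y : ℝ × ℝ) : ℂ :=
  Complex.exp ((((2 * Real.pi : ℝ)) : ℂ) * Complex.I *
    ((m.1 : ℂ) * (y.1 : ℂ) + (m.2 : ℂ) * (y.2 : ℂ)))

theorem norm_chr (m : ℤ × ℤ) (y : ℝ × ℝ) : ‖chr m y‖ = 1 := by
  have : chr m y = Complex.exp (((2 * Real.pi * (m.1 * y.1 + m.2 * y.2) : ℝ) : ℂ) * Complex.I) := by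
    rw [chr]; congr 1; push_cast; ring
  rw [this, Complex.norm_exp_ofReal_mul_I]

theorem mFourier_chr (m : ℤ × ℤ) (y : ℝ × ℝ) (x : UnitAddTorus (Fin 2))
    (h0 : x 0 = ((y.1 : ℝ) : UnitAddCircle)) (h1 : x 1 = ((y.2 : ℝ) : UnitAddCircle)) :
    UnitAddTorus.mFourier (eIdx m) x = chr m y := by
  simp only [UnitAddTorus.mFourier, ContinuousMap.coe_mk, Fin.prod_univ_two, h0, h1,
    fourier_coe_apply, chr, ← Complex.exp_add]
  congr 1
  simp [eIdx, finTwoArrowEquiv]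
  ring

theorem fn_bound {F : ℤ × ℤ → ℂ} (hF : Summable fun m => ‖F m‖) {M : ℝ}
    (hM : ∀ y, ‖∑' m, F m * chr m y‖ ≤ M) (x : UnitAddTorus (Fin 2)) : ‖fn F x‖ ≤ M := by
  obtain ⟨y0, h0⟩ := QuotientAddGroup.mk_surjective (x 0)
  obtain ⟨y1, h1⟩ := QuotientAddGroup.mk_surjective (x 1)
  rw [← (fn_hasSum_apply hF x).tsum_eq]
  simp only [mFourier_chr _ (y0, y1) x h0.symm h1.symm]
  exact hM _

theorem base_mult {F G : ℤ × ℤ → ℂ} (hF : Summable fun m => ‖F m‖)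
    (hG : Summable fun m => ‖G m‖) {M : ℝ}
    (hM : ∀ y, ‖∑' m, F m * chr m y‖ ≤ M) :
    ∑' n, ‖convC F G n‖ ^ 2 ≤ M ^ 2 * ∑' n, ‖G n‖ ^ 2 := by
  rw [(fn_parseval (conv_summable hF hG)).tsum_eq, (fn_parseval hG).tsum_eq,
    ← integral_const_mul]
  have hi : ∀ f : C(UnitAddTorus (Fin 2), ℂ), Integrable (fun t => ‖f t‖ ^ 2) := fun f => by
    have : Continuous (fun t => ‖f t‖ ^ 2) := by fun_prop
    exact this.integrable_of_hasCompactSupport (HasCompactSupport.of_compactSpace _)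
  refine integral_mono (hi _) ((hi _).const_mul _) fun t => ?_
  simp only [fn_conv hF hG, norm_mul, mul_pow]
  gcongr
  exact fn_bound hF hM t

/-- Young's inequality as a corollary. -/
theorem young {F G : ℤ × ℤ → ℂ} (hF : Summable fun m => ‖F m‖)
    (hG : Summable fun m => ‖G m‖) :
    ∑' n, ‖convC F G n‖ ^ 2 ≤ (∑' n, ‖F n‖) ^ 2 * ∑' n, ‖G n‖ ^ 2 := by
  refine base_mult hF hG fun y => ?_
  refine (norm_tsum_le_tsum_norm ?_).trans (le_of_eq ?_)
  · simpa [norm_chr] using hF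
  · simp [norm_chr]

theorem conv_comm (F G : ℤ × ℤ → ℂ) : convC F G = convC G F := by
  funext n
  rw [convC, convC, ← (Equiv.subLeft n).tsum_eq]
  refine tsum_congr fun m => ?_
  simp [mul_comm]

theorem cs_tsum {ι : Type*} {f g : ι → ℝ} (hf : ∀ i, 0 ≤ f i) (hg : ∀ i, 0 ≤ g i)
    (sf : Summable fun i => f i ^ 2) (sg : Summable fun i => g i ^ 2) :
    (Summable fun i => f i * g i) ∧
      ∑' i, f i * g i ≤ Real.sqrt (∑' i, f i ^ 2) * Real.sqrt (∑' i, g i ^ 2) := by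
  have := Real.summable_and_inner_le_Lp_mul_Lq_tsum_of_nonneg (p := 2) (q := 2)
    Real.HolderConjugate.two_two hf hg (by simpa using sf) (by simpa using sg)
  simpa [Real.sqrt_eq_rpow] using this

/-- Inhomogeneous weight. -/
def W (n : ℤ × ℤ) : ℝ := 1 + (n.1 : ℝ) ^ 2 + (n.2 : ℝ) ^ 2

theorem one_le_W (n : ℤ × ℤ) : 1 ≤ W n := by
  unfold W; nlinarith [sq_nonneg (n.1 : ℝ), sq_nonneg (n.2 : ℝ)]

theorem W_pos (n : ℤ × ℤ) : 0 < W n := lt_of_lt_of_le one_pos (one_le_W n)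

theorem W_peetre (n m : ℤ × ℤ) : W n ≤ 2 * (W m * W (n - m)) := by
  simp only [W, Prod.fst_sub, Prod.snd_sub, Int.cast_sub]
  generalize (n.1 : ℝ) = a
  generalize (n.2 : ℝ) = b
  generalize (m.1 : ℝ) = c
  generalize (m.2 : ℝ) = d
  have h1 : a ^ 2 ≤ 2 * (c ^ 2 + (a - c) ^ 2) := by nlinarith [sq_nonneg (a - 2 * c)]
  have h2 : b ^ 2 ≤ 2 * (d ^ 2 + (b - d) ^ 2) := by nlinarith [sq_nonneg (b - 2 * d)]
  have h3 : 0 ≤ (c ^ 2 + d ^ 2) * ((a - c) ^ 2 + (b - d) ^ 2) := by positivity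
  nlinarith

theorem summable_int_sq : Summable fun n : ℤ => (1 + (n : ℝ) ^ 2)⁻¹ := by
  have h : Summable fun n : ℤ => 1 / (n : ℝ) ^ 2 :=
    Real.summable_one_div_int_pow.mpr (by norm_num)
  have h2 : Summable fun n : ℤ => if n = 0 then (1 : ℝ) else 0 :=
    (hasSum_ite_eq (0 : ℤ) (1 : ℝ)).summable
  refine Summable.of_nonneg_of_le (fun n => by positivity) (fun n => ?_) (h.add h2)
  by_cases hn : n = 0
  · simp [hn]
  · have : (0 : ℝ) < (n : ℝ) ^ 2 := by positivity
    simp only [hn, if_false, add_zero, one_div]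
    gcongr
    linarith

theorem summable_W : Summable fun n : ℤ × ℤ => (W n ^ 2)⁻¹ := by
  have h := summable_int_sq.mul_of_nonneg summable_int_sq (fun n => by positivity)
    (fun n => by positivity)
  refine Summable.of_nonneg_of_le (fun n => by have := W_pos n; positivity) (fun n => ?_) h
  rw [← mul_inv]
  gcongr
  unfold W
  nlinarith [sq_nonneg (n.1 : ℝ), sq_nonneg (n.2 : ℝ),
    mul_nonneg (sq_nonneg (n.1 : ℝ)) (sq_nonneg (n.2 : ℝ)), sq_nonneg ((n.1 : ℝ) ^ 2),
    sq_nonneg ((n.2 : ℝ) ^ 2)]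

/-- Rapid decay. -/
def Rap (F : ℤ × ℤ → ℂ) : Prop := ∀ s : ℕ, ∃ C : ℝ, ∀ n, W n ^ s * ‖F n‖ ≤ C

theorem Rap.summable_pow {F : ℤ × ℤ → ℂ} (h : Rap F) (s : ℕ) :
    Summable fun n => W n ^ s * ‖F n‖ := by
  obtain ⟨C, hC⟩ := h (s + 2)
  refine Summable.of_nonneg_of_le (fun n => by have := W_pos n; positivity) (fun n => ?_)
    (summable_W.mul_left C)
  have := W_pos n
  rw [← div_eq_mul_inv, le_div_iff₀ (by positivity)]
  calc _ = W n ^ (s + 2) * ‖F n‖ := by ring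
    _ ≤ C := hC n

theorem Rap.summable {F : ℤ × ℤ → ℂ} (h : Rap F) : Summable fun n => ‖F n‖ := by
  simpa using h.summable_pow 0

theorem Rap.of_le {F G : ℤ × ℤ → ℂ} (h : Rap F) (K : ℝ) (hK : 0 ≤ K) (p : ℕ)
    (hG : ∀ n, ‖G n‖ ≤ K * W n ^ p * ‖F n‖) : Rap G := by
  intro s
  obtain ⟨C, hC⟩ := h (s + p)
  refine ⟨K * C, fun n => ?_⟩
  have := W_pos n
  calc _ ≤ W n ^ s * (K * W n ^ p * ‖F n‖) := by gcongr; exact hG n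
    _ = K * (W n ^ (s + p) * ‖F n‖) := by ring
    _ ≤ K * C := by gcongr; exact hC n

theorem Rap.conv {F G : ℤ × ℤ → ℂ} (hF : Rap F) (hG : Rap G) : Rap (convC F G) := by
  intro s
  obtain ⟨C, hC⟩ := hG s
  refine ⟨2 ^ s * ((∑' m, W m ^ s * ‖F m‖) * C), fun n => ?_⟩
  have hs := (conv_summable_aux hF.summable hG.summable).prod_factor n
  have hW := W_pos n
  have h1 : ‖convC F G n‖ ≤ ∑' m, ‖F m * G (n - m)‖ := norm_tsum_le_tsum_norm hs
  calc _ ≤ W n ^ s * ∑' m, ‖F m * G (n - m)‖ := by gcongr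
    _ = ∑' m, W n ^ s * ‖F m * G (n - m)‖ := by rw [tsum_mul_left]
    _ ≤ ∑' m, 2 ^ s * ((W m ^ s * ‖F m‖) * C) := by
        refine Summable.tsum_le_tsum (fun m => ?_) (hs.mul_left _)
          (((hF.summable_pow s).mul_right C).mul_left _)
        have hm := W_pos m
        have hm' := W_pos (n - m)
        calc _ ≤ (2 * (W m * W (n - m))) ^ s * ‖F m * G (n - m)‖ := by
                gcongr; exact W_peetre n m
          _ = 2 ^ s * ((W m ^ s * ‖F m‖) * (W (n - m) ^ s * ‖G (n - m)‖)) := by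
                rw [norm_mul, mul_pow, mul_pow]; ring
          _ ≤ _ := by gcongr; exact hC _
    _ = _ := by rw [tsum_mul_left, tsum_mul_right]

/-- Weight. -/
def L (n : ℤ × ℤ) : ℝ := 4 * Real.pi ^ 2 * ((n.1 : ℝ) ^ 2 + (n.2 : ℝ) ^ 2)

theorem lam_eq (k : Freq) : lam k = L k.1 := rfl

theorem knormSq_ge (k : Freq) : 1 ≤ knormSq k := by
  obtain ⟨⟨a, b⟩, h⟩ := k
  simp only [knormSq]
  have : 1 ≤ a ^ 2 + b ^ 2 := by
    by_contra hc
    have h1 : a ^ 2 = 0 := by nlinarith [sq_nonneg a, sq_nonneg b]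
    have h2 : b ^ 2 = 0 := by nlinarith [sq_nonneg a, sq_nonneg b]
    apply h
    simp only [ne_eq, OfNat.ofNat_ne_zero, not_false_eq_true, pow_eq_zero_iff] at h1 h2
    simp [h1, h2]
  exact_mod_cast this

theorem pi_sq_ge : (9 : ℝ) ≤ Real.pi ^ 2 := by nlinarith [Real.pi_gt_three]

theorem pi_sq_le : Real.pi ^ 2 ≤ 16 := by nlinarith [Real.pi_gt_three, Real.pi_le_four]

theorem lam_ge (k : Freq) : 1 ≤ lam k := by
  have := knormSq_ge k
  unfold lam; nlinarith [pi_sq_ge]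

theorem lam_pos (k : Freq) : 0 < lam k := lt_of_lt_of_le one_pos (lam_ge k)

theorem W_le_lam (k : Freq) : W k.1 ≤ lam k := by
  have h := knormSq_ge k
  have : W k.1 = 1 + knormSq k := by simp only [W, knormSq]; ring
  rw [this]; unfold lam; nlinarith [pi_sq_ge]

theorem L_nonneg (n : ℤ × ℤ) : 0 ≤ L n := by unfold L; positivity

theorem L_le_W (n : ℤ × ℤ) : L n ≤ 64 * W n := by
  unfold L W
  have := pi_sq_le
  have : 0 ≤ (n.1 : ℝ) ^ 2 + (n.2 : ℝ) ^ 2 := by positivity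
  nlinarith

theorem lam_rpow_le (α : ℝ) : ∃ N : ℕ, ∀ k : Freq, lam k ^ α ≤ 64 ^ N * W k.1 ^ N := by
  refine ⟨⌈α⌉₊, fun k => ?_⟩
  calc lam k ^ α ≤ lam k ^ ((⌈α⌉₊ : ℕ) : ℝ) :=
        Real.rpow_le_rpow_of_exponent_le (lam_ge k) (Nat.le_ceil α)
    _ = lam k ^ ⌈α⌉₊ := Real.rpow_natCast _ _
    _ ≤ (64 * W k.1) ^ ⌈α⌉₊ := by
        have := lam_pos k
        gcongr; exact L_le_W _
    _ = _ := mul_pow _ _ _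

theorem val_inj : Function.Injective (fun k : Freq => k.1) := Subtype.val_injective

theorem Rap.summable_h {F : ℤ × ℤ → ℂ} (h : Rap F) (α : ℝ) :
    Summable fun k : Freq => lam k ^ α * ‖F k.1‖ ^ 2 := by
  obtain ⟨N, hN⟩ := lam_rpow_le α
  obtain ⟨C, hC⟩ := h 0
  have hs := ((h.summable_pow N).mul_left (64 ^ N * C)).comp_injective val_inj
  refine Summable.of_nonneg_of_le (fun k => ?_) (fun k => ?_) hs
  · have := lam_pos k; positivity
  · have hW := W_pos k.1
    have h0 := hC k.1
    simp only [pow_zero, one_mul] at h0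
    calc _ ≤ (64 ^ N * W k.1 ^ N) * (C * ‖F k.1‖) := by
          gcongr
          · exact hN k
          · rw [sq]; gcongr
      _ = _ := by simp only [Function.comp]; ring

theorem evec_sq (k : Freq) : (evec k).1 ^ 2 + (evec k).2 ^ 2 = 1 := by
  have h := knormSq_ge k
  have h' : (0:ℝ) ≤ knormSq k := by linarith
  simp only [evec, div_pow, neg_sq, Real.sq_sqrt h']
  rw [← add_div, div_eq_one_iff_eq (by linarith)]
  simp only [knormSq]; ring

theorem evecC_sq_le (i : Fin 2) (k : Freq) : evecC i k ^ 2 ≤ 1 := by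
  have := evec_sq k
  unfold evecC
  split_ifs <;> nlinarith [sq_nonneg (evec k).1, sq_nonneg (evec k).2]

theorem evecC_abs_le (i : Fin 2) (k : Freq) : |evecC i k| ≤ 1 := by
  have := evecC_sq_le i k
  rw [← sq_le_one_iff_abs_le_one]; exact this

theorem compCoef_freq (i : Fin 2) (c : Coef) (k : Freq) :
    compCoef i c k.1 = c k * ((evecC i k : ℝ) : ℂ) := by
  have : k.1 ≠ 0 := k.2
  simp [compCoef, this]; rfl

theorem compCoef_zero (i : Fin 2) (c : Coef) : compCoef i c 0 = 0 := by
  simp [compCoef]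

theorem compCoef_norm_le (i : Fin 2) (c : Coef) (k : Freq) : ‖compCoef i c k.1‖ ≤ ‖c k‖ := by
  rw [compCoef_freq, norm_mul, Complex.norm_real]
  exact mul_le_of_le_one_right (norm_nonneg _) (evecC_abs_le i k)

theorem forall_idx {p : ℤ × ℤ → Prop} (h0 : p 0) (h : ∀ k : Freq, p k.1) (n : ℤ × ℤ) : p n := by
  by_cases hn : n = 0
  · rwa [hn]
  · exact h ⟨n, hn⟩

theorem MemHinf.rap {c : Coef} (h : MemHinf c) (i : Fin 2) : Rap (compCoef i c) := by
  intro s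
  have hs := (h ((2 * s : ℕ) : ℝ)).2
  refine ⟨Real.sqrt (∑' k, lam k ^ ((2 * s : ℕ) : ℝ) * ‖c k‖ ^ 2), fun n => ?_⟩
  revert n
  refine forall_idx ?_ ?_
  · simp [compCoef_zero, Real.sqrt_nonneg]
  · intro k
    have hW := W_pos k.1
    refine Real.le_sqrt_of_sq_le ?_
    have h1 := hs.le_tsum k (fun j _ => by have := lam_pos j; positivity)
    refine le_trans ?_ h1
    rw [Real.rpow_natCast, mul_pow, ← pow_mul, mul_comm s 2]
    have hl := lam_pos k
    gcongr
    · exact W_le_lam k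
    · exact compCoef_norm_le i c k

theorem tsum_freq {g : ℤ × ℤ → ℝ} (h0 : g 0 = 0) : ∑' k : Freq, g k.1 = ∑' n, g n := by
  refine val_inj.tsum_eq ?_
  intro n hn
  refine ⟨⟨n, ?_⟩, rfl⟩
  rintro rfl
  exact hn h0

theorem tsum_freq_c {g : ℤ × ℤ → ℂ} (h0 : g 0 = 0) : ∑' k : Freq, g k.1 = ∑' n, g n := by
  refine val_inj.tsum_eq ?_
  intro n hn
  refine ⟨⟨n, ?_⟩, rfl⟩
  rintro rfl
  exact hn h0

theorem tsum_freq_le {g : ℤ × ℤ → ℝ} (h0 : ∀ n, 0 ≤ g n) (hs : Summable g) :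
    ∑' k : Freq, g k.1 ≤ ∑' n, g n :=
  tsum_comp_le_tsum_of_inj hs h0 val_inj

theorem Rap.summable_L {F : ℤ × ℤ → ℂ} (h : Rap F) (l : ℕ) :
    Summable fun n => L n ^ l * ‖F n‖ ^ 2 := by
  obtain ⟨C, hC⟩ := h 0
  have hs := ((h.summable_pow l).mul_left (64 ^ l * C))
  refine Summable.of_nonneg_of_le (fun k => ?_) (fun k => ?_) hs
  · have := L_nonneg k; positivity
  · have hW := W_pos k
    have hL := L_nonneg k
    have h0 := hC k
    simp only [pow_zero, one_mul] at h0
    calc _ ≤ (64 * W k) ^ l * (C * ‖F k‖) := by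
          gcongr
          · exact L_le_W k
          · rw [sq]; gcongr
      _ = _ := by rw [mul_pow]; ring

theorem Rap.summable_sq {F : ℤ × ℤ → ℂ} (h : Rap F) : Summable fun n => ‖F n‖ ^ 2 := by
  simpa using h.summable_L 0

theorem hSqScalar_nat (l : ℕ) (F : ℤ × ℤ → ℂ) (h : l ≠ 0 ∨ F 0 = 0) :
    hSqScalar (l : ℝ) F = ∑' n, L n ^ l * ‖F n‖ ^ 2 := by
  rw [← tsum_freq (g := fun n => L n ^ l * ‖F n‖ ^ 2)]
  · simp only [hSqScalar, Real.rpow_natCast, lam_eq]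
  · rcases h with h | h
    · have : L 0 = 0 := by simp [L]
      simp [this, h]
    · simp [h]

theorem hSqScalar_nonneg (α : ℝ) (F : ℤ × ℤ → ℂ) : 0 ≤ hSqScalar α F :=
  tsum_nonneg fun k => by have := lam_pos k; positivity

theorem hSq_nonneg (α : ℝ) (c : Coef) : 0 ≤ hSq α c :=
  tsum_nonneg fun k => by have := lam_pos k; positivity

theorem hN_sq (α : ℝ) (c : Coef) : hN α c ^ 2 = hSq α c := Real.sq_sqrt (hSq_nonneg α c)

theorem hSqScalar_comp_le {c : Coef} (h : MemHinf c) (α : ℝ) (i : Fin 2) :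
    hSqScalar α (compCoef i c) ≤ hSq α c := by
  refine Summable.tsum_le_tsum (fun k => ?_) ((h.rap i).summable_h α) (h α).2
  have := lam_pos k
  gcongr
  exact compCoef_norm_le i c k

theorem evalComp_eq (i : Fin 2) (c : Coef) (y : ℝ × ℝ) :
    evalComp i c y = ∑' n, compCoef i c n * chr n y := by
  rw [← tsum_freq_c (by simp [compCoef_zero]), evalComp]
  refine tsum_congr fun k => ?_
  rw [compCoef_freq]; rfl

theorem evalComp_norm_le {c : Coef} (h : ∀ i, Rap (compCoef i c)) (i : Fin 2) (y : ℝ × ℝ) :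
    ‖evalComp i c y‖ ≤ ∑' n, ‖compCoef i c n‖ := by
  rw [evalComp_eq]
  refine (norm_tsum_le_tsum_norm ?_).trans (le_of_eq ?_)
  · simpa [norm_chr] using (h i).summable
  · simp [norm_chr]

theorem evalComp_le_c0N {c : Coef} (h : ∀ i, Rap (compCoef i c)) (i : Fin 2) (y : ℝ × ℝ) :
    ‖evalComp i c y‖ ≤ c0N c := by
  have hb : BddAbove (range fun x : ℝ × ℝ => max ‖evalComp 0 c x‖ ‖evalComp 1 c x‖) := by
    refine ⟨max (∑' n, ‖compCoef 0 c n‖) (∑' n, ‖compCoef 1 c n‖), ?_⟩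
    rintro _ ⟨x, rfl⟩
    exact max_le_max (evalComp_norm_le h 0 x) (evalComp_norm_le h 1 x)
  refine le_trans ?_ (le_ciSup hb y)
  fin_cases i
  · exact le_max_left _ _
  · exact le_max_right _ _

theorem c0N_nonneg (c : Coef) : 0 ≤ c0N c :=
  Real.iSup_nonneg fun _ => le_max_of_le_left (norm_nonneg _)

theorem bN_nonneg (l : ℕ) (c : Coef) : 0 ≤ bN l c := by
  have h := c0N_nonneg
  unfold bN
  split_ifs
  · exact h c
  · unfold c1N; have h1 := h c; have h2 := h (pderiv 0 c); have h3 := h (pderiv 1 c); linarith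
  · exact Real.sqrt_nonneg _

theorem mult_zero {u : Coef} (hu : ∀ i, Rap (compCoef i u)) (i : Fin 2) {G : ℤ × ℤ → ℂ}
    (hG : Rap G) :
    ∑' n, ‖convC (compCoef i u) G n‖ ^ 2 ≤ c0N u ^ 2 * ∑' n, ‖G n‖ ^ 2 :=
  base_mult (hu i).summable hG.summable fun y => by
    rw [← evalComp_eq]; exact evalComp_le_c0N hu i y

/-- Derivative on scalar Fourier coefficients. -/
def dm (j : Fin 2) (F : ℤ × ℤ → ℂ) : ℤ × ℤ → ℂ := fun n =>
  (((2 * Real.pi : ℝ) : ℂ) * Complex.I) *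
    (if j = 0 then ((n.1 : ℤ) : ℂ) else ((n.2 : ℤ) : ℂ)) * F n

theorem compCoef_pderiv (i j : Fin 2) (c : Coef) :
    compCoef i (pderiv j c) = dm j (compCoef i c) := by
  funext n
  revert n
  refine forall_idx ?_ ?_
  · simp [compCoef_zero, dm]
  · intro k
    rw [compCoef_freq, dm, compCoef_freq, pderiv]; ring

theorem dm_norm (j : Fin 2) (F : ℤ × ℤ → ℂ) (n : ℤ × ℤ) :
    ‖dm j F n‖ = 2 * Real.pi * |if j = 0 then (n.1 : ℝ) else (n.2 : ℝ)| * ‖F n‖ := by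
  have h : |2 * Real.pi| = 2 * Real.pi := abs_of_pos Real.two_pi_pos
  rw [dm, norm_mul, norm_mul, norm_mul, Complex.norm_I, Complex.norm_real, Real.norm_eq_abs, h,
    mul_one]
  split_ifs <;> simp

theorem dm_sq (F : ℤ × ℤ → ℂ) (n : ℤ × ℤ) :
    ‖dm 0 F n‖ ^ 2 + ‖dm 1 F n‖ ^ 2 = L n * ‖F n‖ ^ 2 := by
  rw [dm_norm, dm_norm]
  simp only [mul_pow, sq_abs, L]
  simp
  ring

theorem Rap.dm {F : ℤ × ℤ → ℂ} (h : Rap F) (j : Fin 2) : Rap (dm j F) := by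
  refine h.of_le 8 (by norm_num) 1 fun n => ?_
  rw [dm_norm, pow_one]
  gcongr
  · linarith [Real.pi_le_four]
  · unfold W
    split_ifs
    · rw [abs_le]; constructor <;> nlinarith [sq_nonneg ((n.1 : ℝ) - 1), sq_nonneg ((n.1 : ℝ) + 1),
        sq_nonneg (n.2 : ℝ), sq_nonneg (n.1 : ℝ)]
    · rw [abs_le]; constructor <;> nlinarith [sq_nonneg ((n.2 : ℝ) - 1), sq_nonneg ((n.2 : ℝ) + 1),
        sq_nonneg (n.2 : ℝ), sq_nonneg (n.1 : ℝ)]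

theorem conv_pt {F G : ℤ × ℤ → ℂ} (hF : Rap F) (hG : Rap G) (n : ℤ × ℤ) :
    Summable fun m => ‖F m * G (n - m)‖ :=
  (conv_summable_aux hF.summable hG.summable).prod_factor n

theorem dm_conv {F G : ℤ × ℤ → ℂ} (hF : Rap F) (hG : Rap G) (j : Fin 2) (n : ℤ × ℤ) :
    dm j (convC F G) n = convC (dm j F) G n + convC F (dm j G) n := by
  have h1 := (conv_pt (hF.dm j) hG n).of_norm
  have h2 := (conv_pt hF (hG.dm j) n).of_norm
  rw [convC, convC, ← h1.tsum_add h2, dm, convC, ← tsum_mul_left]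
  refine tsum_congr fun m => ?_
  simp only [dm, Prod.fst_sub, Prod.snd_sub, Int.cast_sub]
  split_ifs <;> ring

theorem sq_norm_add_le (x y : ℂ) : ‖x + y‖ ^ 2 ≤ 2 * ‖x‖ ^ 2 + 2 * ‖y‖ ^ 2 := by
  have := norm_add_le x y
  nlinarith [norm_nonneg (x + y), norm_nonneg x, norm_nonneg y, sq_nonneg (‖x‖ - ‖y‖)]

theorem mult_one {u : Coef} (hu : MemHinf u) (i : Fin 2) {G : ℤ × ℤ → ℂ}
    (hG : Rap G) (hG0 : G 0 = 0) :
    hSqScalar ((1 : ℕ) : ℝ) (convC (compCoef i u) G)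
      ≤ 2 * c1N u ^ 2 * hSqScalar ((1 : ℕ) : ℝ) G := by
  rw [hSqScalar_nat 1 _ (Or.inl one_ne_zero), hSqScalar_nat 1 _ (Or.inl one_ne_zero)]
  simp only [pow_one, ← dm_sq]
  have hF := fun i => hu.rap i
  have hP := (hF i).conv hG
  have hd : ∀ j i, Rap (compCoef i (pderiv j u)) := fun j i => by
    rw [compCoef_pderiv]; exact (hF i).dm j
  have key : ∀ j, ∑' n, ‖dm j (convC (compCoef i u) G) n‖ ^ 2 ≤
      2 * (c0N (pderiv j u) ^ 2 * ∑' n, ‖G n‖ ^ 2) + 2 * (c0N u ^ 2 * ∑' n, ‖dm j G n‖ ^ 2) := by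
    intro j
    have e1 := mult_zero (hd j) i hG
    have e2 := mult_zero hF i (hG.dm j)
    rw [compCoef_pderiv] at e1
    have s1 := (((hF i).dm j).conv hG).summable_sq
    have s2 := ((hF i).conv (hG.dm j)).summable_sq
    calc _ ≤ ∑' n, (2 * ‖convC (dm j (compCoef i u)) G n‖ ^ 2
            + 2 * ‖convC (compCoef i u) (dm j G) n‖ ^ 2) := by
          refine Summable.tsum_le_tsum (fun n => ?_) (hP.dm j).summable_sq
            ((s1.mul_left 2).add (s2.mul_left 2))
          rw [dm_conv (hF i) hG]
          exact sq_norm_add_le _ _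
      _ = 2 * ∑' n, ‖convC (dm j (compCoef i u)) G n‖ ^ 2
            + 2 * ∑' n, ‖convC (compCoef i u) (dm j G) n‖ ^ 2 := by
          rw [(s1.mul_left 2).tsum_add (s2.mul_left 2), tsum_mul_left, tsum_mul_left]
      _ ≤ _ := by gcongr
  have hpoin : ∑' n, ‖G n‖ ^ 2 ≤ ∑' n, ‖dm 0 G n‖ ^ 2 + ∑' n, ‖dm 1 G n‖ ^ 2 := by
    rw [← (hG.dm 0).summable_sq.tsum_add (hG.dm 1).summable_sq]
    refine Summable.tsum_le_tsum ?_ hG.summable_sq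
      ((hG.dm 0).summable_sq.add (hG.dm 1).summable_sq)
    refine forall_idx ?_ ?_
    · rw [dm_sq]; simp [hG0]
    · intro k
      rw [dm_sq, ← lam_eq]
      exact le_mul_of_one_le_left (by positivity) (lam_ge k)
  rw [(hP.dm 0).summable_sq.tsum_add (hP.dm 1).summable_sq,
    (hG.dm 0).summable_sq.tsum_add (hG.dm 1).summable_sq]
  have k0 := key 0
  have k1 := key 1
  have p0 : 0 ≤ ∑' n, ‖dm 0 G n‖ ^ 2 := tsum_nonneg fun n => by positivity
  have p1 : 0 ≤ ∑' n, ‖dm 1 G n‖ ^ 2 := tsum_nonneg fun n => by positivity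
  generalize ∑' n, ‖dm 0 G n‖ ^ 2 = X0 at *
  generalize ∑' n, ‖dm 1 G n‖ ^ 2 = X1 at *
  generalize ∑' n, ‖G n‖ ^ 2 = Y at *
  have c0 := c0N_nonneg u
  have c1 := c0N_nonneg (pderiv 0 u)
  have c2 := c0N_nonneg (pderiv 1 u)
  unfold c1N
  generalize c0N u = a at *
  generalize c0N (pderiv 0 u) = b at *
  generalize c0N (pderiv 1 u) = c at *
  have h1 : b ^ 2 * Y ≤ b ^ 2 * (X0 + X1) := by gcongr
  have h2 : c ^ 2 * Y ≤ c ^ 2 * (X0 + X1) := by gcongr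
  have h3 : (a ^ 2 + b ^ 2 + c ^ 2) * (X0 + X1) ≤ (a + b + c) ^ 2 * (X0 + X1) := by
    gcongr
    nlinarith [mul_nonneg c0 c1, mul_nonneg c0 c2, mul_nonneg c1 c2]
  nlinarith

/-- Square root weight. -/
def rtw (n : ℤ × ℤ) : ℝ := 2 * Real.pi * ‖((n.1 : ℂ) + (n.2 : ℂ) * Complex.I)‖

theorem rtw_nonneg (n : ℤ × ℤ) : 0 ≤ rtw n := by
  have := Real.two_pi_pos
  unfold rtw; positivity

theorem rtw_sq (n : ℤ × ℤ) : rtw n ^ 2 = L n := by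
  have : ((n.1 : ℂ) + (n.2 : ℂ) * Complex.I) = (((n.1 : ℝ) : ℂ) + ((n.2 : ℝ) : ℂ) * Complex.I) := by
    push_cast; rfl
  rw [rtw, mul_pow, this, Complex.sq_norm, Complex.normSq_add_mul_I, L]
  ring

theorem rtw_tri (n m : ℤ × ℤ) : rtw n ≤ rtw m + rtw (n - m) := by
  have := Real.two_pi_pos
  rw [rtw, rtw, rtw, ← mul_add]
  gcongr
  refine le_trans (le_of_eq ?_) (norm_add_le _ _)
  congr 1
  simp only [Prod.fst_sub, Prod.snd_sub, Int.cast_sub]; ring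

theorem rtw_pow_tri (l : ℕ) (n m : ℤ × ℤ) :
    rtw n ^ l ≤ 2 ^ l * (rtw m ^ l + rtw (n - m) ^ l) := by
  have h1 := rtw_nonneg m
  have h2 := rtw_nonneg (n - m)
  calc _ ≤ (rtw m + rtw (n - m)) ^ l := pow_le_pow_left₀ (rtw_nonneg n) (rtw_tri n m) l
    _ ≤ 2 ^ (l - 1) * (rtw m ^ l + rtw (n - m) ^ l) := add_pow_le h1 h2 l
    _ ≤ _ := by
      gcongr
      · norm_num
      · omega

/-- Modulus of coefficients. -/
def nF (F : ℤ × ℤ → ℂ) : ℤ × ℤ → ℂ := fun n => ((‖F n‖ : ℝ) : ℂ)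

/-- Weighted modulus of coefficients. -/
def aF (l : ℕ) (F : ℤ × ℤ → ℂ) : ℤ × ℤ → ℂ := fun n => ((rtw n ^ l * ‖F n‖ : ℝ) : ℂ)

theorem nF_norm (F : ℤ × ℤ → ℂ) (n : ℤ × ℤ) : ‖nF F n‖ = ‖F n‖ := by simp [nF]

theorem aF_norm (l : ℕ) (F : ℤ × ℤ → ℂ) (n : ℤ × ℤ) : ‖aF l F n‖ = rtw n ^ l * ‖F n‖ := by
  have := rtw_nonneg n
  rw [aF, Complex.norm_real, Real.norm_eq_abs, abs_of_nonneg (by positivity)]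

theorem Rap.nF {F : ℤ × ℤ → ℂ} (h : Rap F) : Rap (nF F) :=
  h.of_le 1 one_pos.le 0 fun n => by simp [nF_norm]

theorem Rap.aF {F : ℤ × ℤ → ℂ} (h : Rap F) (l : ℕ) : Rap (aF l F) := by
  refine h.of_le (64 ^ l) (by positivity) l fun n => ?_
  have hr := rtw_nonneg n
  rw [aF_norm, ← mul_pow]
  gcongr
  have h1 := rtw_sq n
  have h2 := L_le_W n
  have h3 := one_le_W n
  nlinarith

theorem aF_sq (l : ℕ) (F : ℤ × ℤ → ℂ) (n : ℤ × ℤ) : ‖aF l F n‖ ^ 2 = L n ^ l * ‖F n‖ ^ 2 := by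
  rw [aF_norm, mul_pow, ← rtw_sq]; ring

theorem conv_pos_norm {f g : ℤ × ℤ → ℝ} (hf : ∀ n, 0 ≤ f n) (hg : ∀ n, 0 ≤ g n) (n : ℤ × ℤ) :
    ‖convC (fun n => (f n : ℂ)) (fun n => (g n : ℂ)) n‖ = ∑' m, f m * g (n - m) := by
  have : convC (fun n => (f n : ℂ)) (fun n => (g n : ℂ)) n = ((∑' m, f m * g (n - m) : ℝ) : ℂ) := by
    rw [convC, Complex.ofReal_tsum]; push_cast; rfl
  rw [this, Complex.norm_real, Real.norm_eq_abs, abs_of_nonneg]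
  exact tsum_nonneg fun m => mul_nonneg (hf _) (hg _)

theorem aF_conv_le {F G : ℤ × ℤ → ℂ} (hF : Rap F) (hG : Rap G) (l : ℕ) (n : ℤ × ℤ) :
    ‖aF l (convC F G) n‖ ≤ 2 ^ l * (‖convC (aF l F) (nF G) n‖ + ‖convC (nF F) (aF l G) n‖) := by
  have hr := rtw_nonneg
  have s0 := conv_pt hF hG n
  have s1 := conv_pt (hF.aF l) hG.nF n
  have s2 := conv_pt hF.nF (hG.aF l) n
  have e1 : ‖convC (aF l F) (nF G) n‖ = ∑' m, (rtw m ^ l * ‖F m‖) * ‖G (n - m)‖ :=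
    conv_pos_norm (f := fun n => rtw n ^ l * ‖F n‖) (g := fun n => ‖G n‖)
      (fun n => by have := hr n; positivity) (fun n => norm_nonneg _) n
  have e2 : ‖convC (nF F) (aF l G) n‖ = ∑' m, ‖F m‖ * (rtw (n - m) ^ l * ‖G (n - m)‖) :=
    conv_pos_norm (g := fun n => rtw n ^ l * ‖G n‖) (f := fun n => ‖F n‖)
      (fun n => norm_nonneg _) (fun n => by have := hr n; positivity) n
  simp only [norm_mul, aF_norm, nF_norm] at s0 s1 s2
  rw [e1, e2, ← s1.tsum_add s2, aF_norm, ← tsum_mul_left]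
  have h0 : ‖convC F G n‖ ≤ ∑' m, ‖F m‖ * ‖G (n - m)‖ := by
    have := norm_tsum_le_tsum_norm (conv_pt hF hG n)
    simp only [norm_mul] at this
    exact this
  have := hr n
  calc _ ≤ rtw n ^ l * ∑' m, ‖F m‖ * ‖G (n - m)‖ := by gcongr
    _ = ∑' m, rtw n ^ l * (‖F m‖ * ‖G (n - m)‖) := by rw [tsum_mul_left]
    _ ≤ _ := by
      refine Summable.tsum_le_tsum (fun m => ?_) (s0.mul_left _) ((s1.add s2).mul_left _)
      calc _ ≤ (2 ^ l * (rtw m ^ l + rtw (n - m) ^ l)) * (‖F m‖ * ‖G (n - m)‖) := by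
            gcongr; exact rtw_pow_tri l n m
        _ = _ := by ring

theorem l1_le {G : ℤ × ℤ → ℂ} (hG : Rap G) (hG0 : G 0 = 0) {l : ℕ} (hl : 2 ≤ l) :
    (∑' n, ‖G n‖) ^ 2 ≤ (∑' n, (W n ^ 2)⁻¹) * ∑' n, L n ^ l * ‖G n‖ ^ 2 := by
  have h := cs_tsum (f := fun n => (W n)⁻¹) (g := fun n => W n * ‖G n‖)
    (fun n => by have := W_pos n; positivity) (fun n => by have := W_pos n; positivity)
    (by simpa only [inv_pow] using summable_W)
    ((hG.of_le (G := fun n => ((W n : ℝ) : ℂ) * G n) 1 one_pos.le 1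
      (fun n => by
        rw [norm_mul, Complex.norm_real, Real.norm_eq_abs, abs_of_pos (W_pos n)]; simp)).summable_sq.congr
      (fun n => by
        rw [norm_mul, Complex.norm_real, Real.norm_eq_abs, abs_of_pos (W_pos n)]))
  have e : ∀ n, (W n)⁻¹ * (W n * ‖G n‖) = ‖G n‖ := fun n => by
    have := (W_pos n).ne'
    field_simp
  simp only [e, inv_pow] at h
  have hle : ∑' n, (W n * ‖G n‖) ^ 2 ≤ ∑' n, L n ^ l * ‖G n‖ ^ 2 := by
    have hs := hG.summable_L l
    refine Summable.tsum_le_tsum ?_ (Summable.of_nonneg_of_le (fun n => sq_nonneg _) ?_ hs) hs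
    all_goals
      refine forall_idx ?_ ?_
      · simp [hG0]
      · intro k
        have h1 := W_pos k.1
        rw [mul_pow, ← lam_eq]
        gcongr
        calc W k.1 ^ 2 ≤ lam k ^ 2 := by gcongr; exact W_le_lam k
          _ ≤ lam k ^ l := pow_le_pow_right₀ (lam_ge k) hl
  have n1 : 0 ≤ ∑' n, (W n ^ 2)⁻¹ := tsum_nonneg fun n => by positivity
  have n2 : 0 ≤ ∑' n, (W n * ‖G n‖) ^ 2 := tsum_nonneg fun n => by positivity
  have n3 : 0 ≤ ∑' n, ‖G n‖ := tsum_nonneg fun n => by positivity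
  calc _ ≤ (√(∑' n, (W n ^ 2)⁻¹) * √(∑' n, (W n * ‖G n‖) ^ 2)) ^ 2 := by gcongr; exact h.2
    _ = (∑' n, (W n ^ 2)⁻¹) * ∑' n, (W n * ‖G n‖) ^ 2 := by
      rw [mul_pow, Real.sq_sqrt n1, Real.sq_sqrt n2]
    _ ≤ _ := by gcongr

theorem mult_high {F G : ℤ × ℤ → ℂ} (hF : Rap F) (hF0 : F 0 = 0)
    (hG : Rap G) (hG0 : G 0 = 0) {l : ℕ} (hl : 2 ≤ l) :
    hSqScalar (l : ℝ) (convC F G)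
      ≤ (2 ^ l) ^ 2 * 4 * (∑' n, (W n ^ 2)⁻¹) * hSqScalar (l : ℝ) F * hSqScalar (l : ℝ) G := by
  rw [hSqScalar_nat l _ (Or.inl (by omega)), hSqScalar_nat l _ (Or.inl (by omega)),
    hSqScalar_nat l _ (Or.inl (by omega))]
  have y1 := young hG.nF.summable (hF.aF l).summable
  have y2 := young hF.nF.summable (hG.aF l).summable
  rw [conv_comm] at y1
  have s1 := ((hF.aF l).conv hG.nF).summable_sq
  have s2 := (hF.nF.conv (hG.aF l)).summable_sq
  have g1 := l1_le hG hG0 hl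
  have g2 := l1_le hF hF0 hl
  simp only [nF_norm, aF_sq] at y1 y2
  have main : ∑' n, L n ^ l * ‖convC F G n‖ ^ 2 ≤ (2 ^ l) ^ 2 * 2 *
      (∑' n, ‖convC (aF l F) (nF G) n‖ ^ 2 + ∑' n, ‖convC (nF F) (aF l G) n‖ ^ 2) := by
    rw [← s1.tsum_add s2, ← tsum_mul_left]
    refine Summable.tsum_le_tsum (fun n => ?_) ((hF.conv hG).summable_L l) ((s1.add s2).mul_left _)
    rw [← aF_sq]
    have := aF_conv_le hF hG l n
    calc _ ≤ (2 ^ l * (‖convC (aF l F) (nF G) n‖ + ‖convC (nF F) (aF l G) n‖)) ^ 2 := by gcongr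
      _ ≤ _ := by
        rw [mul_pow, mul_assoc]
        gcongr
        nlinarith [sq_nonneg (‖convC (aF l F) (nF G) n‖ - ‖convC (nF F) (aF l G) n‖)]
  have n1 : 0 ≤ ∑' n, L n ^ l * ‖F n‖ ^ 2 :=
    tsum_nonneg fun n => by have := L_nonneg n; positivity
  have n2 : 0 ≤ ∑' n, L n ^ l * ‖G n‖ ^ 2 :=
    tsum_nonneg fun n => by have := L_nonneg n; positivity
  calc _ ≤ _ := main
    _ ≤ (2 ^ l) ^ 2 * 2 * (((∑' n, (W n ^ 2)⁻¹) * ∑' n, L n ^ l * ‖G n‖ ^ 2) *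
          (∑' n, L n ^ l * ‖F n‖ ^ 2) +
          ((∑' n, (W n ^ 2)⁻¹) * ∑' n, L n ^ l * ‖F n‖ ^ 2) *
          (∑' n, L n ^ l * ‖G n‖ ^ 2)) := by
        gcongr
        · exact y1.trans (by gcongr)
        · exact y2.trans (by gcongr)
    _ = _ := by ring

theorem pos_mult (l : ℕ) : ∃ C : ℝ, 0 < C ∧ ∀ (u : Coef), MemHinf u → ∀ (i : Fin 2)
    (G : ℤ × ℤ → ℂ), Rap G → G 0 = 0 →
    hSqScalar (l : ℝ) (convC (compCoef i u) G) ≤ C * bN l u ^ 2 * hSqScalar (l : ℝ) G := by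
  rcases Nat.lt_or_ge l 2 with hl | hl
  · interval_cases l
    · refine ⟨1, one_pos, fun u hu i G hG hG0 => ?_⟩
      rw [hSqScalar_nat 0 G (Or.inr hG0)]
      have h := mult_zero (fun i => hu.rap i) i hG
      have h2 := tsum_freq_le (fun n => by positivity) ((hu.rap i).conv hG).summable_sq
      simpa [hSqScalar, bN] using h2.trans h
    · refine ⟨2, two_pos, fun u hu i G hG hG0 => ?_⟩
      simpa [bN] using mult_one hu i hG hG0
  · have n0 : 0 ≤ ∑' n, (W n ^ 2)⁻¹ := tsum_nonneg fun n => by positivity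
    refine ⟨(2 ^ l) ^ 2 * 4 * (∑' n, (W n ^ 2)⁻¹) + 1, by positivity, fun u hu i G hG hG0 => ?_⟩
    have h := mult_high (hu.rap i) (compCoef_zero i u) hG hG0 hl
    have e : bN l u = hN l u := by
      unfold bN; rw [if_neg (by omega), if_neg (by omega)]
    rw [e, hN_sq]
    have h1 := hSqScalar_comp_le hu l i
    have h2 := hSqScalar_nonneg l G
    have h3 := hSqScalar_nonneg l (compCoef i u)
    refine h.trans ?_
    gcongr
    linarith

theorem wcs {f g : Freq → ℝ} (hf : ∀ k, 0 ≤ f k) (hg : ∀ k, 0 ≤ g k) (β γ δ : ℝ)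
    (hδ : β + γ = 2 * δ) (sf : Summable fun k => lam k ^ β * f k ^ 2)
    (sg : Summable fun k => lam k ^ γ * g k ^ 2) :
    (Summable fun k => lam k ^ δ * (f k * g k)) ∧
      ∑' k, lam k ^ δ * (f k * g k) ≤
        Real.sqrt (∑' k, lam k ^ β * f k ^ 2) * Real.sqrt (∑' k, lam k ^ γ * g k ^ 2) := by
  have e : ∀ (α : ℝ) (x : ℝ) k, (lam k ^ (α / 2) * x) ^ 2 = lam k ^ α * x ^ 2 := fun α x k => by
    rw [mul_pow, ← Real.rpow_natCast (lam k ^ (α / 2)), ← Real.rpow_mul (lam_pos k).le]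
    congr 2; push_cast; ring
  have e2 : ∀ k, (lam k ^ (β / 2) * f k) * (lam k ^ (γ / 2) * g k) = lam k ^ δ * (f k * g k) :=
    fun k => by
      have : δ = β / 2 + γ / 2 := by linarith
      rw [this, Real.rpow_add (lam_pos k)]; ring
  have h := cs_tsum (f := fun k => lam k ^ (β / 2) * f k) (g := fun k => lam k ^ (γ / 2) * g k)
    (fun k => mul_nonneg (Real.rpow_nonneg (lam_pos k).le _) (hf k))
    (fun k => mul_nonneg (Real.rpow_nonneg (lam_pos k).le _) (hg k))
    (by simpa only [e] using sf) (by simpa only [e] using sg)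
  simpa only [e, e2] using h

theorem knormSq_fneg (k : Freq) : knormSq (fneg k) = knormSq k := by
  simp [knormSq, fneg]

theorem evecC_fneg (i : Fin 2) (k : Freq) : evecC i (fneg k) = - evecC i k := by
  unfold evecC evec
  rw [knormSq_fneg]
  simp only [fneg]
  split_ifs
  · simp [neg_div]
  · simp [neg_div]

theorem compCoef_neg {u : Coef} (hu : IsReal u) (i : Fin 2) (n : ℤ × ℤ) :
    compCoef i u (-n) = (starRingEnd ℂ) (compCoef i u n) := by
  revert n
  refine forall_idx ?_ ?_
  · simp [compCoef_zero]
  · intro k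
    have : -k.1 = (fneg k).1 := rfl
    rw [this, compCoef_freq, compCoef_freq, hu k, evecC_fneg]
    simp

theorem neg_mult (l : ℕ) {C B : ℝ} (hC : 0 ≤ C) {F G : ℤ × ℤ → ℂ} (hF : Rap F)
    (hFr : ∀ n, F (-n) = (starRingEnd ℂ) (F n)) (hG : Rap G) (hG0 : G 0 = 0)
    (hpos : ∀ H, Rap H → H 0 = 0 →
      hSqScalar (l : ℝ) (convC F H) ≤ C * B ^ 2 * hSqScalar (l : ℝ) H) :
    hSqScalar (-(l : ℝ)) (convC F G) ≤ C * B ^ 2 * hSqScalar (-(l : ℝ)) G := by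
  set P := convC F G with hPdef
  have hP : Rap P := hF.conv hG
  set X := hSqScalar (-(l : ℝ)) P with hX
  have hX0 : 0 ≤ X := hSqScalar_nonneg _ _
  let h : ℤ × ℤ → ℂ := fun n => if n = 0 then 0 else ((L n ^ (-(l : ℝ)) : ℝ) : ℂ) * P n
  have h0 : h 0 = 0 := by simp [h]
  have hk : ∀ k : Freq, h k.1 = ((lam k ^ (-(l : ℝ)) : ℝ) : ℂ) * P k.1 := fun k => by
    have : k.1 ≠ 0 := k.2
    simp only [h, this, if_false, lam_eq]
  have hkn : ∀ k : Freq, ‖h k.1‖ = lam k ^ (-(l : ℝ)) * ‖P k.1‖ := fun k => by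
    rw [hk, norm_mul, Complex.norm_real, Real.norm_eq_abs,
      abs_of_nonneg (Real.rpow_nonneg (lam_pos k).le _)]
  have hh : Rap h := by
    refine hP.of_le 1 one_pos.le 0 ?_
    refine forall_idx ?_ ?_
    · simp [h0]
    · intro k
      rw [hkn, pow_zero, mul_one]
      gcongr
      exact Real.rpow_le_one_of_one_le_of_nonpos (lam_ge k) (by simp)
  have hSh : hSqScalar (l : ℝ) h = X := by
    rw [hX, hSqScalar, hSqScalar]
    refine tsum_congr fun k => ?_
    have hp := lam_pos k
    rw [hkn, Real.rpow_neg hp.le]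
    have : lam k ^ (l : ℝ) ≠ 0 := (Real.rpow_pos_of_pos hp _).ne'
    field_simp
  -- duality identity
  have hdual : (X : ℂ) = ∑' n, G n * (starRingEnd ℂ) (convC F h n) := by
    have e1 : (X : ℂ) = ∑' n, (starRingEnd ℂ) (h n) * P n := by
      rw [← tsum_freq_c (by simp [h0]), hX, hSqScalar, Complex.ofReal_tsum]
      refine tsum_congr fun k => ?_
      rw [hk, map_mul, Complex.conj_ofReal, mul_assoc, Complex.conj_mul']
      push_cast; rfl
    have e2 : ∀ k, (starRingEnd ℂ) (h k) * P k =
        ∑' n, (starRingEnd ℂ) (h k) * (G n * F (k - n)) := fun k => by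
      rw [tsum_mul_left, hPdef, conv_comm F G]; rfl
    have hsum : Summable (Function.uncurry fun (k n : ℤ × ℤ) =>
        (starRingEnd ℂ) (h k) * (G n * F (k - n))) := by
      obtain ⟨K, hK⟩ := hF 0
      simp only [pow_zero, one_mul] at hK
      have := (hh.summable.mul_of_nonneg hG.summable (fun _ => norm_nonneg _)
        (fun _ => norm_nonneg _)).mul_right K
      refine Summable.of_norm (Summable.of_nonneg_of_le (fun _ => norm_nonneg _) ?_ this)
      rintro ⟨k, n⟩
      simp only [Function.uncurry, norm_mul, RCLike.norm_conj]
      rw [← mul_assoc]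
      gcongr
      exact hK _
    rw [e1]
    simp only [e2]
    rw [← hsum.tsum_comm]
    refine tsum_congr fun n => ?_
    rw [conv_comm F h, convC, Complex.conj_tsum, ← tsum_mul_left]
    refine tsum_congr fun k => ?_
    rw [map_mul, ← hFr, neg_sub]; ring
  have hQ : Rap (convC F h) := hF.conv hh
  have hw := wcs (f := fun k => ‖G k.1‖) (g := fun k => ‖convC F h k.1‖)
    (fun _ => norm_nonneg _) (fun _ => norm_nonneg _) (-(l : ℝ)) l 0 (by ring)
    (hG.summable_h _) (hQ.summable_h _)
  simp only [Real.rpow_zero, one_mul] at hw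
  have hXle : X ≤ Real.sqrt (hSqScalar (-(l : ℝ)) G) * Real.sqrt (hSqScalar (l : ℝ) (convC F h)) := by
    refine le_trans ?_ hw.2
    rw [tsum_freq (g := fun n => ‖G n‖ * ‖convC F h n‖) (by simp [hG0])]
    have : X = ‖(X : ℂ)‖ := by rw [Complex.norm_real, Real.norm_eq_abs, abs_of_nonneg hX0]
    rw [this, hdual]
    have hs : Summable fun n => ‖G n * (starRingEnd ℂ) (convC F h n)‖ := by
      obtain ⟨K, hK⟩ := hQ 0
      simp only [pow_zero, one_mul] at hK
      refine Summable.of_nonneg_of_le (fun _ => norm_nonneg _) (fun n => ?_)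
        (hG.summable.mul_right K)
      rw [norm_mul, RCLike.norm_conj]
      gcongr
      exact hK n
    refine (norm_tsum_le_tsum_norm hs).trans (le_of_eq ?_)
    simp only [norm_mul, RCLike.norm_conj]
  have hp := hpos h hh h0
  rw [hSh] at hp
  have hG1 := hSqScalar_nonneg (-(l : ℝ)) G
  have hQ1 := hSqScalar_nonneg (l : ℝ) (convC F h)
  have hsq : X ^ 2 ≤ hSqScalar (-(l : ℝ)) G * (C * B ^ 2 * X) := by
    calc X ^ 2 ≤ (Real.sqrt (hSqScalar (-(l : ℝ)) G) *
          Real.sqrt (hSqScalar (l : ℝ) (convC F h))) ^ 2 := by gcongr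
      _ = hSqScalar (-(l : ℝ)) G * hSqScalar (l : ℝ) (convC F h) := by
        rw [mul_pow, Real.sq_sqrt hG1, Real.sq_sqrt hQ1]
      _ ≤ _ := by gcongr
  rcases hX0.eq_or_lt with hz | hz
  · rw [← hz]; positivity
  · have : X * X ≤ (C * B ^ 2 * hSqScalar (-(l : ℝ)) G) * X := by nlinarith
    exact le_of_mul_le_mul_right this hz

theorem int_mult (a : ℤ) : ∃ C : ℝ, 0 < C ∧ ∀ (u : Coef), MemHinf u → ∀ (i : Fin 2)
    (G : ℤ × ℤ → ℂ), Rap G → G 0 = 0 →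
    hSqScalar (a : ℝ) (convC (compCoef i u) G) ≤ C * bN a.natAbs u ^ 2 * hSqScalar (a : ℝ) G := by
  obtain ⟨C, hC, h⟩ := pos_mult a.natAbs
  refine ⟨C, hC, fun u hu i G hG hG0 => ?_⟩
  rcases Int.natAbs_eq a with ha | ha
  · have e : (a : ℝ) = (a.natAbs : ℝ) := by
      conv_lhs => rw [ha]
      simp
    rw [e]; exact h u hu i G hG hG0
  · have e : (a : ℝ) = -(a.natAbs : ℝ) := by
      conv_lhs => rw [ha]
      simp
    rw [e]
    exact neg_mult a.natAbs hC.le (hu.rap i) (compCoef_neg (hu 0).1 i) hG hG0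
      (fun H hH hH0 => h u hu i H hH hH0)

theorem mat_mult (a : ℤ) : ∃ C : ℝ, 0 < C ∧ ∀ (u v : Coef), MemHinf u → MemHinf v →
    hSqMat (a : ℝ) u v ≤ (C * (bN a.natAbs u * hN (a : ℝ) v)) ^ 2 ∧
    hSqMat (a : ℝ) u v ≤ (C * (hN (a : ℝ) u * bN a.natAbs v)) ^ 2 := by
  obtain ⟨C, hC, h⟩ := int_mult a
  have e4 : (Real.sqrt (4 * C)) ^ 2 = 4 * C := Real.sq_sqrt (by positivity)
  refine ⟨Real.sqrt (4 * C), by positivity, fun u v hu hv => ⟨?_, ?_⟩⟩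
  · have key : ∀ i j : Fin 2, hSqScalar a (convC (compCoef i u) (compCoef j v)) ≤
        C * bN a.natAbs u ^ 2 * hSq a v := fun i j =>
      (h u hu i _ (hv.rap j) (compCoef_zero j v)).trans (by
        have := hSqScalar_comp_le hv a j
        gcongr)
    rw [mul_pow, mul_pow, e4, hN_sq, hSqMat]
    simp only [Fin.sum_univ_two]
    linarith [key 0 0, key 0 1, key 1 0, key 1 1]
  · have key : ∀ i j : Fin 2, hSqScalar a (convC (compCoef i u) (compCoef j v)) ≤
        C * bN a.natAbs v ^ 2 * hSq a u := fun i j => by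
      rw [conv_comm]
      exact (h v hv j _ (hu.rap i) (compCoef_zero i u)).trans (by
        have := hSqScalar_comp_le hu a i
        gcongr)
    rw [mul_pow, mul_pow, e4, hN_sq, hSqMat]
    simp only [Fin.sum_univ_two]
    linarith [key 0 0, key 0 1, key 1 0, key 1 1]

/-- Fourier coefficients of the tensor product. -/
def Z (u v : Coef) (i j : Fin 2) (k : Freq) : ℂ := convC (compCoef i u) (compCoef j v) k.1

theorem evec_dot (m : Freq) : dotR (evec m) (fvec m) = 0 := by
  simp only [dotR, evec, fvec]; ring

theorem Bc_eq {u v : Coef} (hu : MemHinf u) (hv : MemHinf v) (k : Freq) :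
    Bc u v k = (((2 * Real.pi : ℝ) : ℂ) * Complex.I) *
      ((((k.1.1 : ℝ) * (evec k).1 : ℝ) : ℂ) * Z u v 0 0 k
      + (((k.1.1 : ℝ) * (evec k).2 : ℝ) : ℂ) * Z u v 0 1 k
      + (((k.1.2 : ℝ) * (evec k).1 : ℝ) : ℂ) * Z u v 1 0 k
      + (((k.1.2 : ℝ) * (evec k).2 : ℝ) : ℂ) * Z u v 1 1 k) := by
  rw [Bc]
  congr 1
  have s := fun i j => (conv_pt (hu.rap i) (hv.rap j) k.1).of_norm
  simp only [Z, convC, ← tsum_mul_left]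
  rw [← ((s 0 0).mul_left _).tsum_add ((s 0 1).mul_left _),
    ← (((s 0 0).mul_left _).add ((s 0 1).mul_left _)).tsum_add ((s 1 0).mul_left _),
    ← ((((s 0 0).mul_left _).add ((s 0 1).mul_left _)).add ((s 1 0).mul_left _)).tsum_add
      ((s 1 1).mul_left _)]
  rw [← tsum_freq_c (by simp [compCoef_zero])]
  refine tsum_congr fun m => ?_
  by_cases hn : k.1 - m.1 = 0
  · simp [hn, compCoef_zero]
  · rw [dif_pos hn]
    have e : ∀ j, compCoef j v (k.1 - m.1) = v ⟨k.1 - m.1, hn⟩ *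
        ((evecC j ⟨k.1 - m.1, hn⟩ : ℝ) : ℂ) := fun j => compCoef_freq j v ⟨k.1 - m.1, hn⟩
    simp only [e, compCoef_freq]
    have hd : dotR (evec m) (fvec ⟨k.1 - m.1, hn⟩) = dotR (evec m) (fvec k) := by
      have := evec_dot m
      simp only [dotR, fvec, Prod.fst_sub, Prod.snd_sub, Int.cast_sub] at this ⊢
      linarith
    rw [hd]
    simp only [dotR, fvec, evecC]
    push_cast
    simp
    ring

theorem cs4 (a b c d x y z w : ℝ) : (a * x + b * y + c * z + d * w) ^ 2 ≤
    (a ^ 2 + b ^ 2 + c ^ 2 + d ^ 2) * (x ^ 2 + y ^ 2 + z ^ 2 + w ^ 2) := by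
  have := Finset.sum_mul_sq_le_sq_mul_sq Finset.univ ![a, b, c, d] ![x, y, z, w]
  simpa [Fin.sum_univ_four] using this

theorem Bc_le {u v : Coef} (hu : MemHinf u) (hv : MemHinf v) (k : Freq) :
    ‖Bc u v k‖ ^ 2 ≤ lam k * ∑ i : Fin 2, ∑ j : Fin 2, ‖Z u v i j k‖ ^ 2 := by
  rw [Bc_eq hu hv, norm_mul, norm_mul, Complex.norm_I, Complex.norm_real, Real.norm_eq_abs,
    mul_one, mul_pow, sq_abs]
  have h1 : ‖(((k.1.1 : ℝ) * (evec k).1 : ℝ) : ℂ) * Z u v 0 0 k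
      + (((k.1.1 : ℝ) * (evec k).2 : ℝ) : ℂ) * Z u v 0 1 k
      + (((k.1.2 : ℝ) * (evec k).1 : ℝ) : ℂ) * Z u v 1 0 k
      + (((k.1.2 : ℝ) * (evec k).2 : ℝ) : ℂ) * Z u v 1 1 k‖ ≤
      |(k.1.1 : ℝ) * (evec k).1| * ‖Z u v 0 0 k‖ + |(k.1.1 : ℝ) * (evec k).2| * ‖Z u v 0 1 k‖
      + |(k.1.2 : ℝ) * (evec k).1| * ‖Z u v 1 0 k‖
      + |(k.1.2 : ℝ) * (evec k).2| * ‖Z u v 1 1 k‖ := by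
    refine norm_add₄_le.trans (le_of_eq ?_)
    simp only [norm_mul, Complex.norm_real, Real.norm_eq_abs, abs_mul]
  have h2 := cs4 |(k.1.1 : ℝ) * (evec k).1| |(k.1.1 : ℝ) * (evec k).2| |(k.1.2 : ℝ) * (evec k).1|
    |(k.1.2 : ℝ) * (evec k).2| ‖Z u v 0 0 k‖ ‖Z u v 0 1 k‖ ‖Z u v 1 0 k‖ ‖Z u v 1 1 k‖
  have h3 : |(k.1.1 : ℝ) * (evec k).1| ^ 2 + |(k.1.1 : ℝ) * (evec k).2| ^ 2
      + |(k.1.2 : ℝ) * (evec k).1| ^ 2 + |(k.1.2 : ℝ) * (evec k).2| ^ 2 = knormSq k := by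
    simp only [sq_abs]
    calc _ = knormSq k * ((evec k).1 ^ 2 + (evec k).2 ^ 2) := by simp only [knormSq]; ring
      _ = _ := by rw [evec_sq, mul_one]
  rw [h3] at h2
  calc _ ≤ (2 * Real.pi) ^ 2 * (knormSq k * (‖Z u v 0 0 k‖ ^ 2 + ‖Z u v 0 1 k‖ ^ 2
          + ‖Z u v 1 0 k‖ ^ 2 + ‖Z u v 1 1 k‖ ^ 2)) :=
        mul_le_mul_of_nonneg_left ((pow_le_pow_left₀ (norm_nonneg _) h1 2).trans h2)
          (by positivity)
    _ = _ := by simp only [lam, Fin.sum_univ_two]; ring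

theorem Z_summable {u v : Coef} (hu : MemHinf u) (hv : MemHinf v) (α : ℝ) (i j : Fin 2) :
    Summable fun k => lam k ^ α * ‖Z u v i j k‖ ^ 2 :=
  ((hu.rap i).conv (hv.rap j)).summable_h α

theorem Bc_h {u v : Coef} (hu : MemHinf u) (hv : MemHinf v) (α : ℝ) :
    FinH α (Bc u v) ∧ hSq α (Bc u v) ≤ hSqMat (α + 1) u v := by
  have hs := Z_summable hu hv (α + 1)
  have hS : HasSum (fun k => ∑ i : Fin 2, ∑ j : Fin 2, lam k ^ (α + 1) * ‖Z u v i j k‖ ^ 2)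
      (hSqMat (α + 1) u v) := by
    rw [hSqMat]
    exact hasSum_sum fun i _ => hasSum_sum fun j _ => (hs i j).hasSum
  have hle : ∀ k, lam k ^ α * ‖Bc u v k‖ ^ 2 ≤
      ∑ i : Fin 2, ∑ j : Fin 2, lam k ^ (α + 1) * ‖Z u v i j k‖ ^ 2 := fun k => by
    have hp := lam_pos k
    calc _ ≤ lam k ^ α * (lam k * ∑ i : Fin 2, ∑ j : Fin 2, ‖Z u v i j k‖ ^ 2) := by
          gcongr; exact Bc_le hu hv k
      _ = _ := by
        rw [Real.rpow_add hp, Real.rpow_one]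
        simp only [Fin.sum_univ_two]; ring
  have hsum : Summable fun k => lam k ^ α * ‖Bc u v k‖ ^ 2 :=
    Summable.of_nonneg_of_le (fun k => by have := lam_pos k; positivity) hle hS.summable
  refine ⟨hsum, ?_⟩
  rw [← hS.tsum_eq]
  exact Summable.tsum_le_tsum hle hsum hS.summable

theorem inner_le {c d : Coef} (α : ℝ) (hc : FinH (α - 1) c) (hd : FinH (α + 1) d) :
    |hInner α c d| ≤ hN (α - 1) c * hN (α + 1) d := by
  have h := wcs (f := fun k => ‖c k‖) (g := fun k => ‖d k‖) (fun _ => norm_nonneg _)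
    (fun _ => norm_nonneg _) (α - 1) (α + 1) α (by ring) hc hd
  have hle : ∀ k, ‖lam k ^ α * (c k * (starRingEnd ℂ) (d k)).re‖ ≤ lam k ^ α * (‖c k‖ * ‖d k‖) :=
    fun k => by
      have hp := Real.rpow_nonneg (lam_pos k).le α
      rw [norm_mul, Real.norm_eq_abs, abs_of_nonneg hp]
      gcongr
      refine (Complex.abs_re_le_norm _).trans ?_
      rw [norm_mul, RCLike.norm_conj]
  refine le_trans ?_ h.2
  exact tsum_of_norm_bounded h.1.hasSum hle

/-- Lemma `PropBilinearFormIdentities2`. For `a ∈ ℤ` and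
smooth `u, v, w ∈ Ḣ^∞_⋄`: (i) `‖B[u,v]‖_{Ḣ^a} ≤ ‖u vᵀ‖_{Ḣ^{a+1}}`, where
`‖u vᵀ‖²_{Ḣ^{a+1}} = Σ_{i,j} ‖u_i v_j‖²_{Ḣ^{a+1}}`; (ii)
`|⟨B[u,v], w⟩_{Ḣ^a}| ≲ min{‖u‖_{B^{|a|}} ‖v‖_{Ḣ^a}, ‖u‖_{Ḣ^a} ‖v‖_{B^{|a|}}}
 · ‖w‖_{Ḣ^{a+1}}`, with `B^ℓ = C^ℓ(Ω)²` for `ℓ ≤ 1` and `B^ℓ = Ḣ^ℓ` for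
`ℓ ≥ 2`. -/
theorem statement11 (a : ℤ) :
    (∀ u v : Coef, MemHinf u → MemHinf v →
      hN (a : ℝ) (Bc u v) ≤ Real.sqrt (hSqMat ((a : ℝ) + 1) u v)) ∧
    (∃ C : ℝ, 0 < C ∧ ∀ u v w : Coef, MemHinf u → MemHinf v → MemHinf w →
      |hInner (a : ℝ) (Bc u v) w| ≤
        C * min (bN a.natAbs u * hN (a : ℝ) v) (hN (a : ℝ) u * bN a.natAbs v) *
          hN ((a : ℝ) + 1) w) := by
  refine ⟨fun u v hu hv => Real.sqrt_le_sqrt (Bc_h hu hv _).2, ?_⟩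
  obtain ⟨C, hC, h⟩ := mat_mult a
  refine ⟨C, hC, fun u v w hu hv hw => ?_⟩
  obtain ⟨h1, h2⟩ := h u v hu hv
  obtain ⟨hB, hB2⟩ := Bc_h hu hv ((a : ℝ) - 1)
  rw [sub_add_cancel] at hB2
  refine (inner_le (a : ℝ) hB (hw _).2).trans ?_
  have hw0 : 0 ≤ hN ((a : ℝ) + 1) w := Real.sqrt_nonneg _
  have hv0 : 0 ≤ hN (a : ℝ) v := Real.sqrt_nonneg _
  have hu0 : 0 ≤ hN (a : ℝ) u := Real.sqrt_nonneg _
  have bu := bN_nonneg a.natAbs u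
  have bv := bN_nonneg a.natAbs v
  refine mul_le_mul_of_nonneg_right ?_ hw0
  rw [mul_min_of_nonneg _ _ hC.le]
  refine le_min ?_ ?_
  · exact Real.sqrt_le_iff.mpr ⟨by positivity, hB2.trans h1⟩
  · exact Real.sqrt_le_iff.mpr ⟨by positivity, hB2.trans h2⟩

end NS2D
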